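/- Let E be a finite-dimensional real inner product space, let H : E → (E →L[ℝ] E) be a map, let ε > 0, let X : E → E be differentiable, and let q : ℝ → E be twice differentiable and satisfy q''(t) = (fderiv ℝ X (q t)) (q'(t)) − ε⁻¹ • H(q t) (q'(t) − X (q t)) for all t. Then the error y(t) := q'(t) − X(q(t)) is differentiable with deriv y t = −ε⁻¹ • H(q t) (y t), and consequently the squared norm satisfies deriv (fun t ↦ ‖y t‖²) t = −(2/ε) · ⟪y t, H(q t) (y t)⟫ for every t. -/

import Mathlib

open RealInnerProductSpace

section VelocityError

variable {𝕜 F : Type*} [NontriviallyNormedField 𝕜] [NormedAddCommGroup F] [NormedSpace 𝕜 F]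
  {X : F → F} {q : 𝕜 → F} {t : 𝕜}

/-- The velocity error `y = q' - X(q)` of a curve `q`, measuring its failure to be an integral
curve of the vector field `X`. -/
noncomputable def velocityError (X : F → F) (q : 𝕜 → F) (t : 𝕜) : F :=
  deriv q t - X (q t)

theorem hasDerivAt_velocityError (hX : DifferentiableAt 𝕜 X (q t)) (hq : DifferentiableAt 𝕜 q t)
    (hq' : DifferentiableAt 𝕜 (deriv q) t) :
    HasDerivAt (velocityError X q) (deriv (deriv q) t - fderiv 𝕜 X (q t) (deriv q t)) t :=
  hq'.hasDerivAt.sub (hX.hasFDerivAt.comp_hasDerivAt t hq.hasDerivAt)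

theorem hasDerivAt_velocityError_of_deriv_deriv_eq {f : F} (hX : DifferentiableAt 𝕜 X (q t))
    (hq : DifferentiableAt 𝕜 q t) (hq' : DifferentiableAt 𝕜 (deriv q) t)
    (heq : deriv (deriv q) t = fderiv 𝕜 X (q t) (deriv q t) - f) :
    HasDerivAt (velocityError X q) (-f) t := by
  have hy := hasDerivAt_velocityError hX hq hq'
  rwa [heq, sub_sub_cancel_left] at hy

end VelocityError

section InnerProductSpace

variable {E : Type*} [NormedAddCommGroup E] [InnerProductSpace ℝ E]

theorem hasDerivAt_norm_sq_of_hasDerivAt_neg_smul {y : ℝ → E} {k t : ℝ} {v : E}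
    (hy : HasDerivAt y (-k • v) t) :
    HasDerivAt (fun s => ‖y s‖ ^ 2) (-(2 * k) * ⟪y t, v⟫) t := by
  convert hy.norm_sq using 1
  rw [real_inner_smul_right]
  ring

theorem stmt10_general (H : E → E → E) (k : ℝ) {X : E → E} {q : ℝ → E} {t : ℝ}
    (hX : DifferentiableAt ℝ X (q t)) (hq : DifferentiableAt ℝ q t)
    (hq' : DifferentiableAt ℝ (deriv q) t)
    (heq : deriv (deriv q) t =
      fderiv ℝ X (q t) (deriv q t) - k • H (q t) (velocityError X q t)) :
    HasDerivAt (velocityError X q) (-k • H (q t) (velocityError X q t)) t ∧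
      HasDerivAt (fun s => ‖velocityError X q s‖ ^ 2)
        (-(2 * k) * ⟪velocityError X q t, H (q t) (velocityError X q t)⟫) t := by
  have hy : HasDerivAt (velocityError X q) (-k • H (q t) (velocityError X q t)) t := by
    rw [neg_smul]
    exact hasDerivAt_velocityError_of_deriv_deriv_eq hX hq hq' heq
  exact ⟨hy, hasDerivAt_norm_sq_of_hasDerivAt_neg_smul hy⟩

end InnerProductSpace

/-- For the closed-loop Koditschek system with operator family `H`, the velocity
error `y(t) = q'(t) − X(q(t))` is differentiable with `y' = −ε⁻¹ H(q) y`, and consequently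
`(d/dt) ‖y‖² = −(2/ε) ⟪y, H(q) y⟫`. -/
theorem stmt10
    {E : Type*} [NormedAddCommGroup E] [InnerProductSpace ℝ E] [FiniteDimensional ℝ E]
    (H : E → (E →L[ℝ] E)) (ε : ℝ) (hε : 0 < ε)
    (X : E → E) (hX : Differentiable ℝ X)
    (q : ℝ → E) (hq : Differentiable ℝ q) (hq' : Differentiable ℝ (deriv q))
    (heq : ∀ t : ℝ, deriv (deriv q) t =
      (fderiv ℝ X (q t)) (deriv q t) - ε⁻¹ • (H (q t)) (deriv q t - X (q t))) :
    ∀ t : ℝ,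
      DifferentiableAt ℝ (fun s => deriv q s - X (q s)) t ∧
      deriv (fun s => deriv q s - X (q s)) t =
        -ε⁻¹ • (H (q t)) (deriv q t - X (q t)) ∧
      deriv (fun s => ‖deriv q s - X (q s)‖ ^ 2) t =
        -(2 / ε) * ⟪deriv q t - X (q t), (H (q t)) (deriv q t - X (q t))⟫ := by
  intro t
  obtain ⟨hy, hnorm⟩ := stmt10_general (fun x => H x) ε⁻¹ (hX (q t)) (hq t) (hq' t) (heq t)
  exact ⟨hy.differentiableAt, hy.deriv, div_eq_mul_inv 2 ε ▸ hnorm.deriv⟩
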